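/- arXiv:1305.6765 — 4 statements merged into one kernel-verified Lean document; each statement's English description precedes it below -/
import Mathlib

section
/- Let T > 0, c > 0, b ≤ 0, ρ ∈ (−1, 0] and a > 0. Let r₁⁺ be the smallest element of {r ∈ [π/2, π) : r·cos r = (b + ρc·p⁺(r))·T·sin r}, where p⁺(r) = (1/(2(1 − ρ²)))·[(1 + 2ρb/c) + √((1 + 2ρb/c)² + 4(1 − ρ²)·(b²/c² + r²/(c²T²)))], and set p₁⁺ = p⁺(r₁⁺). Consider all pairs consisting of a continuously differentiable control h = (h¹, h²) : [0,T] → ℝ² with h(0) = 0 and differentiable functions y, z : [0,T] → ℝ satisfying y'(t) = −z(t)²/2 + z(t)·(√(1 − ρ²)·(h¹)'(t) + ρ·(h²)'(t)), z'(t) = b·z(t) + c·(h²)'(t), with y(0) = z(0) = 0 and y(T) = a. Then the infimum of the energy (1/2)·∫₀ᵀ (((h¹)'(t))² + ((h²)'(t))²) dt over all such pairs equals p₁⁺·a, and this infimum is attained. -/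
/-- The unique positive root `p⁺(r)` of the quadratic
`c²p(p−1) − (b + ρcp)² = r²/T²` in the correlated Stein–Stein model. -/
noncomputable def pPlus (b c T ρ r : ℝ) : ℝ :=
  (1 / (2 * (1 - ρ ^ 2))) * ((1 + 2 * ρ * b / c)
    + Real.sqrt ((1 + 2 * ρ * b / c) ^ 2
        + 4 * (1 - ρ ^ 2) * (b ^ 2 / c ^ 2 + r ^ 2 / (c ^ 2 * T ^ 2))))

/-! Put `ω = r / T`, `β = b + ρ c p` and let `p` solve `c² p (p - 1) = β² + ω²`. Completing squares
in the running cost and integrating gives, for every controlled path,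
`E = p y(T) + ½ ∫ (ḣ¹ - p √(1 - ρ²) z)² + (1 / 2c²) (∫ (ż² - ω² z²) - β z(T)²)`.
The equation defining `r` says `β = ω cot(ωT)`, so the last bracket is nonnegative by Jacobi's
inequality `ω cot(ωT) z(T)² ≤ ∫ (ż² - ω² z²)`, valid for `z(0) = 0` and `ωT < π`, with equality for
`z(t) = sin(ωt)`. Hence `p y(T)` is a lower bound for the energy, attained by `z(t) = sin(ωt)`,
`ḣ¹ = p √(1 - ρ²) z`; scaling `(h, z)` by `K` multiplies both `E` and `y(T)` by `K²`, which reaches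
any prescribed `y(T) ≥ 0`.
-/

section SteinStein

open Filter MeasureTheory Real Set Topology

section IntegralIcc

variable {E : Type*} [NormedAddCommGroup E] [NormedSpace ℝ E] [CompleteSpace E] {f f' : ℝ → E}
  {α β : ℝ}

theorem hasDerivWithinAt_integral_Icc {t : ℝ} (hf : ContinuousOn f (Icc α β)) (ht : t ∈ Icc α β) :
    HasDerivWithinAt (fun s => ∫ x in α..s, f x) (f t) (Icc α β) t := by
  have := Fact.mk ht
  exact intervalIntegral.integral_hasDerivWithinAt_right
    ((hf.mono (Icc_subset_Icc_right ht.2)).intervalIntegrable_of_Icc ht.1)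
    (hf.stronglyMeasurableAtFilter_nhdsWithin measurableSet_Icc t) (hf t ht)

theorem integral_eq_sub_of_hasDerivWithinAt_Icc (hαβ : α ≤ β)
    (hf : ∀ t ∈ Icc α β, HasDerivWithinAt f (f' t) (Icc α β) t)
    (hf' : IntervalIntegrable f' volume α β) :
    ∫ t in α..β, f' t = f β - f α :=
  intervalIntegral.integral_eq_sub_of_hasDerivAt_of_le hαβ
    (fun t ht => (hf t ht).continuousWithinAt)
    (fun t ht => (hf t (Ioo_subset_Icc_self ht)).hasDerivAt (Icc_mem_nhds ht.1 ht.2)) hf'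

end IntegralIcc

section Jacobi

variable {z z' : ℝ → ℝ}

theorem riccati_mul_sq_sub_le_integral {α β : ℝ} (hαβ : α ≤ β) {q φ : ℝ → ℝ}
    (hφ : ∀ t ∈ Icc α β, HasDerivWithinAt φ (-q t - φ t ^ 2) (Icc α β) t)
    (hz : ∀ t ∈ Icc α β, HasDerivWithinAt z (z' t) (Icc α β) t)
    (hint : IntegrableOn (fun t => z' t ^ 2 - q t * z t ^ 2) (Icc α β)) :
    φ β * z β ^ 2 - φ α * z α ^ 2 ≤ ∫ t in α..β, (z' t ^ 2 - q t * z t ^ 2) := by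
  have hderiv : ∀ t ∈ Icc α β, HasDerivWithinAt (fun t => φ t * z t ^ 2)
      ((-q t - φ t ^ 2) * z t ^ 2 + φ t * (2 * z t * z' t)) (Icc α β) t := fun t ht =>
    ((hφ t ht).mul ((hz t ht).pow 2)).congr_deriv (by simp)
  refine intervalIntegral.sub_le_integral_of_hasDeriv_right_of_le hαβ
    (fun t ht => (hderiv t ht).continuousWithinAt)
    (fun t ht => ((hderiv t (Ioo_subset_Icc_self ht)).hasDerivAt
      (Icc_mem_nhds ht.1 ht.2)).hasDerivWithinAt) hint fun t _ => ?_
  linarith [sq_nonneg (z' t - φ t * z t)]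

theorem hasDerivAt_const_mul_cot {ω δ t : ℝ} (h : sin (ω * t + δ) ≠ 0) :
    HasDerivAt (fun t => ω * cot (ω * t + δ)) (-ω ^ 2 - (ω * cot (ω * t + δ)) ^ 2) t := by
  have hlin : HasDerivAt (fun t => ω * t + δ) ω t := by
    simpa using ((hasDerivAt_id t).const_mul ω).add_const δ
  simp only [cot_eq_cos_div_sin]
  refine ((hlin.cos.div hlin.sin h).const_mul ω).congr_deriv ?_
  field_simp

theorem cot_mul_sq_le_integral {ω T : ℝ} (hω : 0 < ω) (hT : 0 < T) (hωT : ω * T < π)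
    (hz : ∀ t ∈ Icc 0 T, HasDerivWithinAt z (z' t) (Icc 0 T) t)
    (hz' : ContinuousOn z' (Icc 0 T)) (hz0 : z 0 = 0) :
    ω * cot (ω * T) * z T ^ 2 ≤ ∫ t in (0 : ℝ)..T, (z' t ^ 2 - ω ^ 2 * z t ^ 2) := by
  have hzc : ContinuousOn z (Icc 0 T) := fun t ht => (hz t ht).continuousWithinAt
  -- `ω cot(ωt)` is singular at `t = 0`; its translates `ω cot(ωt + δ)` are not.
  have hshift : ∀ δ ∈ Ioo 0 (π - ω * T),
      ω * cot (ω * T + δ) * z T ^ 2 ≤ ∫ t in (0 : ℝ)..T, (z' t ^ 2 - ω ^ 2 * z t ^ 2) := by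
    intro δ hδ
    have hsin : ∀ t ∈ Icc 0 T, sin (ω * t + δ) ≠ 0 := fun t ht =>
      (sin_pos_of_pos_of_lt_pi (add_pos_of_nonneg_of_pos (mul_nonneg hω.le ht.1) hδ.1)
        (by linarith [mul_le_mul_of_nonneg_left ht.2 hω.le, hδ.2])).ne'
    simpa [hz0] using riccati_mul_sq_sub_le_integral hT.le (q := fun _ => ω ^ 2)
      (fun t ht => (hasDerivAt_const_mul_cot (hsin t ht)).hasDerivWithinAt) hz
      (ContinuousOn.integrableOn_Icc (by fun_prop))
  have hsinT : sin (ω * T + 0) ≠ 0 := by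
    simpa using (sin_pos_of_pos_of_lt_pi (mul_pos hω hT) hωT).ne'
  have hcont : ContinuousAt (fun δ => ω * cot (ω * T + δ) * z T ^ 2) 0 := by
    simp only [cot_eq_cos_div_sin]
    fun_prop (disch := assumption)
  have hlim : Tendsto (fun δ => ω * cot (ω * T + δ) * z T ^ 2) (𝓝[>] 0)
      (𝓝 (ω * cot (ω * T) * z T ^ 2)) := by
    simpa using hcont.tendsto.mono_left nhdsWithin_le_nhds
  exact le_of_tendsto hlim
    (mem_of_superset (Ioo_mem_nhdsGT (sub_pos.2 hωT)) hshift)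

theorem integral_cos_sq_sub_sin_sq_const_mul (ω T : ℝ) :
    ∫ t in (0 : ℝ)..T, ((ω * cos (ω * t)) ^ 2 - ω ^ 2 * sin (ω * t) ^ 2)
      = ω * cos (ω * T) * sin (ω * T) := by
  have hderiv : ∀ t, HasDerivAt (fun t => ω * cos (ω * t) * sin (ω * t))
      ((ω * cos (ω * t)) ^ 2 - ω ^ 2 * sin (ω * t) ^ 2) t := fun t => by
    have hlin : HasDerivAt (fun t => ω * t) ω t := by
      simpa using (hasDerivAt_id t).const_mul ω
    exact ((hlin.cos.const_mul ω).mul hlin.sin).congr_deriv (by ring)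
  rw [intervalIntegral.integral_eq_sub_of_hasDerivAt (fun t _ => hderiv t)
    (Continuous.intervalIntegrable (by fun_prop) _ _)]
  simp

end Jacobi

section CharacteristicRoot

variable {b c ρ : ℝ}

theorem pPlus_quadratic (T r : ℝ) (hc : c ≠ 0) (hρ : ρ ^ 2 < 1) :
    c ^ 2 * (pPlus b c T ρ r * (pPlus b c T ρ r - 1))
      = (b + ρ * c * pPlus b c T ρ r) ^ 2 + (r / T) ^ 2 := by
  set B := 1 + 2 * ρ * b / c with hB
  set D := b ^ 2 / c ^ 2 + r ^ 2 / (c ^ 2 * T ^ 2) with hD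
  have hA : 0 < 1 - ρ ^ 2 := sub_pos.2 hρ
  have hdiscrim : discrim (1 - ρ ^ 2) (-B) (-D)
      = √(B ^ 2 + 4 * (1 - ρ ^ 2) * D) * √(B ^ 2 + 4 * (1 - ρ ^ 2) * D) := by
    rw [mul_self_sqrt (by positivity), discrim]
    ring
  have hroot := (quadratic_eq_zero_iff hA.ne' hdiscrim (pPlus b c T ρ r)).2
    (.inl (by rw [pPlus]; ring))
  have hcB : c ^ 2 * B = c ^ 2 + 2 * ρ * b * c := by rw [hB]; field_simp
  have hcD : c ^ 2 * D = b ^ 2 + (r / T) ^ 2 := by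
    rw [hD, ← div_div, div_right_comm, ← div_pow r]; field_simp
  linear_combination c ^ 2 * hroot + pPlus b c T ρ r * hcB + hcD

theorem pPlus_pos {T r : ℝ} (hT : T ≠ 0) (hc : c ≠ 0) (hρ : ρ ^ 2 < 1) (hr : r ≠ 0) :
    0 < pPlus b c T ρ r := by
  have : 0 < 1 - ρ ^ 2 := sub_pos.2 hρ
  have hsqrt : |1 + 2 * ρ * b / c| < √((1 + 2 * ρ * b / c) ^ 2
      + 4 * (1 - ρ ^ 2) * (b ^ 2 / c ^ 2 + r ^ 2 / (c ^ 2 * T ^ 2))) := by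
    rw [lt_sqrt (abs_nonneg _), sq_abs, lt_add_iff_pos_right]
    positivity
  exact mul_pos (by positivity) (neg_lt_iff_pos_add'.1 ((neg_le_abs _).trans_lt hsqrt))

end CharacteristicRoot

/-- `y` and `z` solve the controlled Stein–Stein system on `[0, T]` from `(0, 0)`, driven by the
continuous control derivatives `u = ḣ¹` and `v = ḣ²`. -/
structure IsControlledPath (b c ρ T : ℝ) (u v y z : ℝ → ℝ) : Prop where
  continuousOn_fst : ContinuousOn u (Icc 0 T)
  continuousOn_snd : ContinuousOn v (Icc 0 T)
  hasDerivWithinAt_logPrice : ∀ t ∈ Icc 0 T,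
    HasDerivWithinAt y (-(z t ^ 2) / 2 + z t * (√(1 - ρ ^ 2) * u t + ρ * v t)) (Icc 0 T) t
  hasDerivWithinAt_vol : ∀ t ∈ Icc 0 T, HasDerivWithinAt z (b * z t + c * v t) (Icc 0 T) t
  logPrice_zero : y 0 = 0
  vol_zero : z 0 = 0

/-- The energy `½ ‖h‖²_H` of a control `h` with derivative `(u, v)`. -/
noncomputable def controlEnergy (T : ℝ) (u v : ℝ → ℝ) : ℝ :=
  (1 / 2) * ∫ t in (0 : ℝ)..T, (u t ^ 2 + v t ^ 2)

/-- The energies of the `C¹` controls steering the Stein–Stein system from `(0, 0)` to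
`y(T) = a`; `h₁d` and `h₂d` are the derivatives of `h₁` and `h₂`. -/
def steeringEnergies (T c b ρ a : ℝ) : Set ℝ :=
  {E : ℝ | ∃ h₁ h₂ h₁d h₂d y z : ℝ → ℝ,
    ContinuousOn h₁d (Icc 0 T) ∧ ContinuousOn h₂d (Icc 0 T) ∧
    (∀ t ∈ Icc 0 T, HasDerivWithinAt h₁ (h₁d t) (Icc 0 T) t) ∧
    (∀ t ∈ Icc 0 T, HasDerivWithinAt h₂ (h₂d t) (Icc 0 T) t) ∧
    h₁ 0 = 0 ∧ h₂ 0 = 0 ∧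
    (∀ t ∈ Icc 0 T,
      HasDerivWithinAt y (-(z t ^ 2) / 2 + z t * (√(1 - ρ ^ 2) * h₁d t + ρ * h₂d t))
        (Icc 0 T) t) ∧
    (∀ t ∈ Icc 0 T, HasDerivWithinAt z (b * z t + c * h₂d t) (Icc 0 T) t) ∧
    y 0 = 0 ∧ z 0 = 0 ∧ y T = a ∧
    E = (1 / 2) * ∫ t in (0 : ℝ)..T, (h₁d t ^ 2 + h₂d t ^ 2)}

theorem mem_steeringEnergies_iff {T c b ρ a E : ℝ} :
    E ∈ steeringEnergies T c b ρ a ↔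
      ∃ u v y z, IsControlledPath b c ρ T u v y z ∧ y T = a ∧ E = controlEnergy T u v := by
  constructor
  · rintro ⟨-, -, u, v, y, z, hu, hv, -, -, -, -, hy, hz, hy0, hz0, hyT, hE⟩
    exact ⟨u, v, y, z, ⟨hu, hv, hy, hz, hy0, hz0⟩, hyT, hE⟩
  · rintro ⟨u, v, y, z, ⟨hu, hv, hy, hz, hy0, hz0⟩, hyT, hE⟩
    exact ⟨fun t => ∫ x in (0 : ℝ)..t, u x, fun t => ∫ x in (0 : ℝ)..t, v x, u, v, y, z, hu, hv,
      fun _ => hasDerivWithinAt_integral_Icc hu, fun _ => hasDerivWithinAt_integral_Icc hv,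
      intervalIntegral.integral_same, intervalIntegral.integral_same, hy, hz, hy0, hz0, hyT, hE⟩

theorem controlEnergy_const_mul (T K : ℝ) (u v : ℝ → ℝ) :
    controlEnergy T (fun t => K * u t) (fun t => K * v t) = K ^ 2 * controlEnergy T u v := by
  simp only [controlEnergy, mul_pow, ← mul_add, intervalIntegral.integral_const_mul]
  ring

theorem controlEnergy_pos {T t : ℝ} {u v : ℝ → ℝ} (hT : 0 < T) (hu : ContinuousOn u (Icc 0 T))
    (hv : ContinuousOn v (Icc 0 T)) (ht : t ∈ Icc 0 T) (hvt : v t ≠ 0) :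
    0 < controlEnergy T u v :=
  mul_pos one_half_pos <| intervalIntegral.integral_pos hT (by fun_prop)
    (fun _ _ => by positivity) ⟨t, ht, by positivity⟩

theorem exists_isControlledPath {b c ρ T : ℝ} {u z z' : ℝ → ℝ} (hc : c ≠ 0)
    (hu : ContinuousOn u (Icc 0 T))
    (hz : ∀ t ∈ Icc 0 T, HasDerivWithinAt z (z' t) (Icc 0 T) t)
    (hz' : ContinuousOn z' (Icc 0 T)) (hz0 : z 0 = 0) :
    ∃ y, IsControlledPath b c ρ T u (fun t => (z' t - b * z t) / c) y z := by
  have hzc : ContinuousOn z (Icc 0 T) := fun t ht => (hz t ht).continuousWithinAt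
  refine ⟨_, ⟨hu, by fun_prop, fun t => hasDerivWithinAt_integral_Icc (by fun_prop),
    fun t ht => (hz t ht).congr_deriv ?_, intervalIntegral.integral_same, hz0⟩⟩
  field_simp
  ring

theorem half_sq_add_sq_eq_completed_squares {b c ρ p ω : ℝ} (hc : c ≠ 0) (hρ : ρ ^ 2 ≤ 1)
    (hp : c ^ 2 * (p * (p - 1)) = (b + ρ * c * p) ^ 2 + ω ^ 2) (u v z : ℝ) :
    (1 / 2) * (u ^ 2 + v ^ 2)
      = (p * (-(z ^ 2) / 2 + z * (√(1 - ρ ^ 2) * u + ρ * v))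
          - (b + ρ * c * p) / (2 * c ^ 2) * (2 * z * (b * z + c * v)))
        + ((1 / 2) * (u - p * √(1 - ρ ^ 2) * z) ^ 2
          + 1 / (2 * c ^ 2) * ((b * z + c * v) ^ 2 - ω ^ 2 * z ^ 2)) := by
  have hs : √(1 - ρ ^ 2) ^ 2 = 1 - ρ ^ 2 := sq_sqrt (sub_nonneg.2 hρ)
  field_simp
  linear_combination -z ^ 2 * hp - c ^ 2 * p ^ 2 * z ^ 2 * hs

namespace IsControlledPath

variable {b c ρ T : ℝ} {u v y z : ℝ → ℝ}

theorem continuousOn_vol (h : IsControlledPath b c ρ T u v y z) : ContinuousOn z (Icc 0 T) :=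
  fun t ht => (h.hasDerivWithinAt_vol t ht).continuousWithinAt

theorem const_mul (h : IsControlledPath b c ρ T u v y z) (K : ℝ) :
    IsControlledPath b c ρ T (fun t => K * u t) (fun t => K * v t) (fun t => K ^ 2 * y t)
      (fun t => K * z t) where
  continuousOn_fst := h.continuousOn_fst.const_mul K
  continuousOn_snd := h.continuousOn_snd.const_mul K
  hasDerivWithinAt_logPrice t ht :=
    ((h.hasDerivWithinAt_logPrice t ht).const_mul (K ^ 2)).congr_deriv (by ring)
  hasDerivWithinAt_vol t ht :=
    ((h.hasDerivWithinAt_vol t ht).const_mul K).congr_deriv (by ring)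
  logPrice_zero := by simp [h.logPrice_zero]
  vol_zero := by simp [h.vol_zero]

theorem controlEnergy_eq (h : IsControlledPath b c ρ T u v y z) {p ω : ℝ} (hT : 0 ≤ T)
    (hc : c ≠ 0) (hρ : ρ ^ 2 ≤ 1) (hp : c ^ 2 * (p * (p - 1)) = (b + ρ * c * p) ^ 2 + ω ^ 2) :
    controlEnergy T u v = p * y T
      + (1 / 2) * (∫ t in (0 : ℝ)..T, (u t - p * √(1 - ρ ^ 2) * z t) ^ 2)
      + 1 / (2 * c ^ 2) * ((∫ t in (0 : ℝ)..T, ((b * z t + c * v t) ^ 2 - ω ^ 2 * z t ^ 2))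
          - (b + ρ * c * p) * z T ^ 2) := by
  have hu := h.continuousOn_fst
  have hv := h.continuousOn_snd
  have hz := h.continuousOn_vol
  set G : ℝ → ℝ := fun t => p * y t - (b + ρ * c * p) / (2 * c ^ 2) * z t ^ 2 with hG
  set g : ℝ → ℝ := fun t => p * (-(z t ^ 2) / 2 + z t * (√(1 - ρ ^ 2) * u t + ρ * v t))
    - (b + ρ * c * p) / (2 * c ^ 2) * (2 * z t * (b * z t + c * v t)) with hg
  have hderiv : ∀ t ∈ Icc 0 T, HasDerivWithinAt G (g t) (Icc 0 T) t := fun t ht =>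
    (((h.hasDerivWithinAt_logPrice t ht).const_mul p).sub
      (((h.hasDerivWithinAt_vol t ht).pow 2).const_mul _)).congr_deriv (by simp [hg])
  have hgi : IntervalIntegrable g volume 0 T :=
    ContinuousOn.intervalIntegrable_of_Icc hT (by fun_prop)
  have hFTC : ∫ t in (0 : ℝ)..T, g t = G T := by
    rw [integral_eq_sub_of_hasDerivWithinAt_Icc hT hderiv hgi]
    simp [hG, h.logPrice_zero, h.vol_zero]
  have hsqi : IntervalIntegrable (fun t => (1 / 2) * (u t - p * √(1 - ρ ^ 2) * z t) ^ 2)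
      volume 0 T := ContinuousOn.intervalIntegrable_of_Icc hT (by fun_prop)
  have hJi : IntervalIntegrable
      (fun t => 1 / (2 * c ^ 2) * ((b * z t + c * v t) ^ 2 - ω ^ 2 * z t ^ 2)) volume 0 T :=
    ContinuousOn.intervalIntegrable_of_Icc hT (by fun_prop)
  calc controlEnergy T u v
      = ∫ t in (0 : ℝ)..T, (g t + ((1 / 2) * (u t - p * √(1 - ρ ^ 2) * z t) ^ 2
          + 1 / (2 * c ^ 2) * ((b * z t + c * v t) ^ 2 - ω ^ 2 * z t ^ 2))) := by
        rw [controlEnergy, ← intervalIntegral.integral_const_mul]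
        exact intervalIntegral.integral_congr fun t _ =>
          half_sq_add_sq_eq_completed_squares hc hρ hp (u t) (v t) (z t)
    _ = _ := by
        rw [intervalIntegral.integral_add hgi (hsqi.add hJi),
          intervalIntegral.integral_add hsqi hJi, hFTC, intervalIntegral.integral_const_mul,
          intervalIntegral.integral_const_mul]
        ring

theorem mul_logPrice_le_controlEnergy (h : IsControlledPath b c ρ T u v y z) {p ω : ℝ}
    (hT : 0 < T) (hc : c ≠ 0) (hρ : ρ ^ 2 ≤ 1) (hω : 0 < ω) (hωT : ω * T < π)
    (hp : c ^ 2 * (p * (p - 1)) = (b + ρ * c * p) ^ 2 + ω ^ 2)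
    (hcot : b + ρ * c * p = ω * cot (ω * T)) :
    p * y T ≤ controlEnergy T u v := by
  have hv := h.continuousOn_snd
  have hz := h.continuousOn_vol
  have hjacobi := cot_mul_sq_le_integral hω hT hωT h.hasDerivWithinAt_vol (by fun_prop) h.vol_zero
  have hsq : 0 ≤ ∫ t in (0 : ℝ)..T, (u t - p * √(1 - ρ ^ 2) * z t) ^ 2 :=
    intervalIntegral.integral_nonneg hT.le fun _ _ => sq_nonneg _
  rw [h.controlEnergy_eq hT.le hc hρ hp, add_assoc]
  refine le_add_of_nonneg_right (add_nonneg (by positivity) (mul_nonneg (by positivity) ?_))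
  rwa [sub_nonneg, hcot]

end IsControlledPath

theorem exists_isControlledPath_controlEnergy_eq {b c ρ T p ω : ℝ} (hT : 0 < T) (hc : c ≠ 0)
    (hρ : ρ ^ 2 ≤ 1) (hω : ω ≠ 0) (hp0 : 0 < p)
    (hp : c ^ 2 * (p * (p - 1)) = (b + ρ * c * p) ^ 2 + ω ^ 2)
    (hcos : (b + ρ * c * p) * sin (ω * T) = ω * cos (ω * T)) :
    ∃ u v y z, IsControlledPath b c ρ T u v y z ∧ 0 < y T ∧ controlEnergy T u v = p * y T := by
  have hz : ∀ t ∈ Icc 0 T,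
      HasDerivWithinAt (fun t => sin (ω * t)) (ω * cos (ω * t)) (Icc 0 T) t := fun t _ => by
    simpa [mul_comm] using ((hasDerivAt_id t).const_mul ω).sin.hasDerivWithinAt
  obtain ⟨y, h⟩ := exists_isControlledPath (b := b) (ρ := ρ)
    (u := fun t => p * √(1 - ρ ^ 2) * sin (ω * t)) hc (by fun_prop) hz (by fun_prop) (by simp)
  have henergy := h.controlEnergy_eq hT.le hc hρ hp
  simp only [mul_div_cancel₀ _ hc, add_sub_cancel, integral_cos_sq_sub_sin_sq_const_mul, ← hcos,
    mul_assoc _ (sin _), ← sq (sin _), sub_self, zero_pow two_ne_zero,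
    intervalIntegral.integral_zero, mul_zero, add_zero] at henergy
  have hpos := controlEnergy_pos hT h.continuousOn_fst h.continuousOn_snd
    (left_mem_Icc.2 hT.le) (by simp [hω, hc])
  exact ⟨_, _, y, _, h, pos_of_mul_pos_right (henergy ▸ hpos) hp0.le, henergy⟩

theorem isLeast_steeringEnergies {T c b ρ p ω a : ℝ} (hT : 0 < T) (hc : c ≠ 0) (hρ : ρ ^ 2 ≤ 1)
    (hω : 0 < ω) (hωT : ω * T < π) (hp0 : 0 < p)
    (hp : c ^ 2 * (p * (p - 1)) = (b + ρ * c * p) ^ 2 + ω ^ 2)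
    (hcot : b + ρ * c * p = ω * cot (ω * T)) (ha : 0 ≤ a) :
    IsLeast (steeringEnergies T c b ρ a) (p * a) := by
  constructor
  · have hsin := (sin_pos_of_pos_of_lt_pi (mul_pos hω hT) hωT).ne'
    obtain ⟨u, v, y, z, h, hyT, henergy⟩ := exists_isControlledPath_controlEnergy_eq hT hc hρ
      hω.ne' hp0 hp (by rw [hcot, cot_eq_cos_div_sin]; field_simp)
    have hK : √(a / y T) ^ 2 * y T = a := by
      rw [sq_sqrt (by positivity), div_mul_cancel₀ _ hyT.ne']
    refine mem_steeringEnergies_iff.2 ⟨_, _, _, _, h.const_mul √(a / y T), hK, ?_⟩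
    rw [controlEnergy_const_mul, henergy, mul_left_comm, hK]
  · intro E hE
    obtain ⟨u, v, y, z, h, rfl, rfl⟩ := mem_steeringEnergies_iff.1 hE
    exact h.mul_logPrice_le_controlEnergy hT hc hρ hω hωT hp hcot

theorem stein_stein_correlated_energy_value_general {T c b ρ a r : ℝ} (hT : 0 < T) (hc : c ≠ 0)
    (hρ : |ρ| < 1) (ha : 0 ≤ a) (hr : r ∈ Ioo 0 π)
    (hroot : r * cos r = (b + ρ * c * pPlus b c T ρ r) * T * sin r) :
    IsLeast (steeringEnergies T c b ρ a) (pPlus b c T ρ r * a) := by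
  have hρ' : ρ ^ 2 < 1 := (sq_lt_one_iff_abs_lt_one ρ).2 hρ
  have hωT : r / T * T = r := div_mul_cancel₀ r hT.ne'
  have hsin : sin r ≠ 0 := (sin_pos_of_mem_Ioo hr).ne'
  refine isLeast_steeringEnergies hT hc hρ'.le (div_pos hr.1 hT) (hωT.trans_lt hr.2)
    (pPlus_pos hT.ne' hc hρ' hr.1.ne') (pPlus_quadratic T r hc hρ') ?_ ha
  rw [hωT, cot_eq_cos_div_sin]
  field_simp
  linarith

end SteinStein

/-- The minimal energy `Λ(a)` of controls steering the small-noise correlated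
Stein–Stein system from `(0,0)` to `y(T) = a` equals `p₁⁺·a`, and the infimum
is attained (`IsLeast`). -/
theorem stein_stein_correlated_energy_value
    (T c b ρ a : ℝ) (hT : 0 < T) (hc : 0 < c) (hb : b ≤ 0)
    (hρ : ρ ∈ Set.Ioc (-1 : ℝ) 0) (ha : 0 < a)
    (r₁ : ℝ)
    (hr₁ : IsLeast
      {r : ℝ | r ∈ Set.Ico (Real.pi / 2) Real.pi ∧
        r * Real.cos r = (b + ρ * c * pPlus b c T ρ r) * T * Real.sin r} r₁) :
    IsLeast
      {E : ℝ | ∃ h₁ h₂ h₁d h₂d y z : ℝ → ℝ,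
        ContinuousOn h₁d (Set.Icc (0 : ℝ) T) ∧ ContinuousOn h₂d (Set.Icc (0 : ℝ) T) ∧
        (∀ t ∈ Set.Icc (0 : ℝ) T, HasDerivWithinAt h₁ (h₁d t) (Set.Icc (0 : ℝ) T) t) ∧
        (∀ t ∈ Set.Icc (0 : ℝ) T, HasDerivWithinAt h₂ (h₂d t) (Set.Icc (0 : ℝ) T) t) ∧
        h₁ 0 = 0 ∧ h₂ 0 = 0 ∧
        (∀ t ∈ Set.Icc (0 : ℝ) T,
          HasDerivWithinAt y
            (-(z t ^ 2) / 2 + z t * (Real.sqrt (1 - ρ ^ 2) * h₁d t + ρ * h₂d t))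
            (Set.Icc (0 : ℝ) T) t) ∧
        (∀ t ∈ Set.Icc (0 : ℝ) T,
          HasDerivWithinAt z (b * z t + c * h₂d t) (Set.Icc (0 : ℝ) T) t) ∧
        y 0 = 0 ∧ z 0 = 0 ∧ y T = a ∧
        E = (1 / 2) * ∫ t in (0 : ℝ)..T, (h₁d t ^ 2 + h₂d t ^ 2)}
      (pPlus b c T ρ r₁ * a) := by
  exact stein_stein_correlated_energy_value_general hT hc.ne'
    (abs_lt.2 ⟨hρ.1, hρ.2.trans_lt one_pos⟩) ha.le
    ⟨Real.pi_div_two_pos.trans_le hr₁.1.1.1, hr₁.1.1.2⟩ hr₁.1.2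
end

section
/- Let c > 0 and b, ρ ∈ ℝ. On the open set U = {p ∈ ℝ : c²p(p − 1) − (b + ρcp)² > 0} define χ(p) = √(c²p(p − 1) − (b + ρcp)²). Then for every p ∈ U: p·χ(p)·χ'(p) = χ(p)² + c²p/2 + b·(b + ρcp). If in addition b ≤ 0, ρ ≤ 0 and p > 0, then p·χ'(p) > χ(p). -/
/-- The frequency `χ(p) = √(c²p(p−1) − (b + ρcp)²)` of the correlated Stein–Stein
Hamiltonian flow. -/
noncomputable def chiFun (b c ρ : ℝ) : ℝ → ℝ :=
  fun p => Real.sqrt (c ^ 2 * p * (p - 1) - (b + ρ * c * p) ^ 2)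

/-!
The square of the frequency is a quadratic polynomial `q(p) = αp² + βp + γ`, and the Euler operator
`p ↦ p · d/dp` doubles its leading term: `p · q'(p) = 2q(p) − (βp + 2γ)`. As `√q · (√q)' = q'/2`,
this gives `p · √q · (√q)' = q − (βp/2 + γ)`, so `p · (√q)'` exceeds `√q` exactly when
`βp/2 + γ < 0`. For the frequency, `−(βp/2 + γ) = c²p/2 + b(b + ρcp)`.
-/

theorem sqrt_mul_deriv_sqrt {f : ℝ → ℝ} {x : ℝ} (hf : DifferentiableAt ℝ f x) (hx : 0 < f x) :
    √(f x) * deriv (fun y => √(f y)) x = deriv f x / 2 := by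
  have hsqrt : √(f x) ≠ 0 := (Real.sqrt_pos.mpr hx).ne'
  rw [deriv_sqrt hf hx.ne']
  field_simp

theorem hasDerivAt_quadratic {𝕜 : Type*} [NontriviallyNormedField 𝕜] {α β γ x : 𝕜} :
    HasDerivAt (fun y : 𝕜 => α * y ^ 2 + β * y + γ) (2 * α * x + β) x := by
  have hsq : HasDerivAt (fun y : 𝕜 => α * y ^ 2) (α * (2 * x)) x := by
    simpa using (hasDerivAt_pow 2 x).const_mul α
  have hlin : HasDerivAt (fun y : 𝕜 => β * y) β x := by
    simpa using (hasDerivAt_id x).const_mul β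
  exact ((hsq.add hlin).add_const γ).congr_deriv (by ring)

section Quadratic

variable {α β γ x : ℝ}

theorem mul_sqrt_mul_deriv_sqrt_quadratic (hx : 0 < α * x ^ 2 + β * x + γ) :
    x * √(α * x ^ 2 + β * x + γ) * deriv (fun y => √(α * y ^ 2 + β * y + γ)) x =
      √(α * x ^ 2 + β * x + γ) ^ 2 - (β * x / 2 + γ) := by
  have hq : HasDerivAt (fun y : ℝ => α * y ^ 2 + β * y + γ) (2 * α * x + β) x :=
    hasDerivAt_quadratic
  rw [mul_assoc, sqrt_mul_deriv_sqrt hq.differentiableAt hx, hq.deriv, Real.sq_sqrt hx.le]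
  ring

theorem sqrt_quadratic_lt_mul_deriv_iff (hx : 0 < α * x ^ 2 + β * x + γ) :
    √(α * x ^ 2 + β * x + γ) < x * deriv (fun y => √(α * y ^ 2 + β * y + γ)) x ↔
      β * x / 2 + γ < 0 := by
  rw [← mul_lt_mul_iff_right₀ (Real.sqrt_pos.mpr hx), mul_left_comm, ← mul_assoc x,
    mul_sqrt_mul_deriv_sqrt_quadratic hx, ← sq, lt_sub_comm, sub_self]

end Quadratic

section Frequency

variable {b c ρ p : ℝ}

theorem chiFun_radicand_eq_quadratic :
    c ^ 2 * p * (p - 1) - (b + ρ * c * p) ^ 2 =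
      c ^ 2 * (1 - ρ ^ 2) * p ^ 2 + -(c ^ 2 + 2 * b * ρ * c) * p + -b ^ 2 := by
  ring

theorem mul_chiFun_mul_deriv_chiFun (hp : 0 < c ^ 2 * p * (p - 1) - (b + ρ * c * p) ^ 2) :
    p * chiFun b c ρ p * deriv (chiFun b c ρ) p =
      chiFun b c ρ p ^ 2 + c ^ 2 * p / 2 + b * (b + ρ * c * p) := by
  unfold chiFun
  simp only [chiFun_radicand_eq_quadratic] at hp ⊢
  rw [mul_sqrt_mul_deriv_sqrt_quadratic hp]
  ring

theorem chiFun_lt_mul_deriv_chiFun_iff (hp : 0 < c ^ 2 * p * (p - 1) - (b + ρ * c * p) ^ 2) :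
    chiFun b c ρ p < p * deriv (chiFun b c ρ) p ↔
      0 < c ^ 2 * p / 2 + b * (b + ρ * c * p) := by
  unfold chiFun
  simp only [chiFun_radicand_eq_quadratic] at hp ⊢
  have hexcess : c ^ 2 * p / 2 + b * (b + ρ * c * p) =
      -(-(c ^ 2 + 2 * b * ρ * c) * p / 2 + -b ^ 2) := by ring
  rw [sqrt_quadratic_lt_mul_deriv_iff hp, hexcess, neg_pos]

theorem ne_zero_of_chiFun_radicand_pos
    (hp : 0 < c ^ 2 * p * (p - 1) - (b + ρ * c * p) ^ 2) : c ≠ 0 := by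
  rintro rfl
  nlinarith [sq_nonneg b]

theorem chiFun_lt_mul_deriv_chiFun (hp : 0 < c ^ 2 * p * (p - 1) - (b + ρ * c * p) ^ 2)
    (hbρc : 0 ≤ b * ρ * c) (hp_pos : 0 < p) :
    chiFun b c ρ p < p * deriv (chiFun b c ρ) p := by
  have hc : c ≠ 0 := ne_zero_of_chiFun_radicand_pos hp
  rw [chiFun_lt_mul_deriv_chiFun_iff hp]
  calc
    0 < c ^ 2 * p / 2 + (b ^ 2 + b * ρ * c * p) := by positivity
    _ = c ^ 2 * p / 2 + b * (b + ρ * c * p) := by ring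

end Frequency

theorem chi_derivative_identity_general (b c ρ : ℝ) :
    ∀ p ∈ {p : ℝ | 0 < c ^ 2 * p * (p - 1) - (b + ρ * c * p) ^ 2},
      p * chiFun b c ρ p * deriv (chiFun b c ρ) p
          = (chiFun b c ρ p) ^ 2 + c ^ 2 * p / 2 + b * (b + ρ * c * p) ∧
      (0 ≤ b * ρ * c → 0 < p → chiFun b c ρ p < p * deriv (chiFun b c ρ) p) :=
  fun _ hp => ⟨mul_chiFun_mul_deriv_chiFun hp, chiFun_lt_mul_deriv_chiFun hp⟩

/-- On the region where `c²p(p−1) − (b + ρcp)² > 0` one has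
`p·χ(p)·χ'(p) = χ(p)² + c²p/2 + b(b + ρcp)`; consequently, if `b ≤ 0`, `ρ ≤ 0`
and `p > 0` then `p·χ'(p) > χ(p)`. -/
theorem chi_derivative_identity (b c ρ : ℝ) (hc : 0 < c) :
    ∀ p ∈ {p : ℝ | 0 < c ^ 2 * p * (p - 1) - (b + ρ * c * p) ^ 2},
      p * chiFun b c ρ p * deriv (chiFun b c ρ) p
          = (chiFun b c ρ p) ^ 2 + c ^ 2 * p / 2 + b * (b + ρ * c * p) ∧
      (b ≤ 0 → ρ ≤ 0 → 0 < p → chiFun b c ρ p < p * deriv (chiFun b c ρ) p) :=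
  fun p hp => (chi_derivative_identity_general b c ρ p hp).imp_right fun hlt hb hρ =>
    hlt (mul_nonneg (mul_nonneg_of_nonpos_of_nonpos hb hρ) hc.le)
end

section
/- Let c > 0, b ≤ 0 and ρ ∈ (−1, 0]. Let p* > 1 be such that c²p*(p* − 1) − (b + ρcp*)² > 0, and define, on a neighbourhood of p* in {p : c²p(p − 1) − (b + ρcp)² > 0}, χ(p) = √(c²p(p − 1) − (b + ρcp)²) and G(p) = χ(p)·cos(χ(p)) − (b + ρcp)·sin(χ(p)). Assume χ(p*) ∈ [π/2, π) and G(p*) = 0. Then G'(p*) < 0. -/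
/-- The transversality function `G(p) = χ(p)cos(χ(p)) − (b + ρcp)sin(χ(p))`. -/
noncomputable def GFun (b c ρ : ℝ) : ℝ → ℝ :=
  fun p => chiFun b c ρ p * Real.cos (chiFun b c ρ p)
    - (b + ρ * c * p) * Real.sin (chiFun b c ρ p)

/-!
Write `x = χ(p)` and `β = b + ρcp`. Where `sin x ≠ 0`, `G = sin x · (x cot x - β)`, so `G = 0`
means `β = x cot x`, and there `G' = sin x · ((x cot x)' x' - β')` with
`(x cot x)' = -(x² + β² - β) / x`. Inserting `x² + β² = c²p(p - 1)` and `ρcp = β - b` turns this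
into `G' = -(c² sin x / (2x²)) · (2(p - 1)(x² - b(1 - β)) + (x² + β² - β))`.
On `(0, π)` the relation `β = x cot x` forces both `β < 1` and `β < x² + β²`, so for `b ≤ 0` and
`p > 1` both summands in the bracket are positive.
-/

open Real

section Cotangent

variable {x β : ℝ}

lemma mul_cos_lt_sin (hx : 0 < x) (hxπ : x < π) : x * cos x < sin x := by
  rcases lt_or_ge x (π / 2) with hacute | hobtuse
  · have hcos : 0 < cos x := cos_pos_of_mem_Ioo ⟨by linarith, hacute⟩
    have htan : x < sin x / cos x := tan_eq_sin_div_cos x ▸ lt_tan hx hacute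
    exact (lt_div_iff₀ hcos).mp htan
  · have hcos : cos x ≤ 0 := cos_nonpos_of_pi_div_two_le_of_le hobtuse (by linarith)
    exact (mul_nonpos_of_nonneg_of_nonpos hx.le hcos).trans_lt (sin_pos_of_pos_of_lt_pi hx hxπ)

lemma lt_one_of_mul_cos_eq_mul_sin (hx : 0 < x) (hxπ : x < π)
    (h : x * cos x = β * sin x) : β < 1 := by
  have hlt : β * sin x < 1 * sin x := by
    rw [← h, one_mul]
    exact mul_cos_lt_sin hx hxπ
  exact lt_of_mul_lt_mul_right hlt (sin_pos_of_pos_of_lt_pi hx hxπ).le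

lemma lt_sq_add_sq_of_mul_cos_eq_mul_sin (hx : 0 < x)
    (h : x * cos x = β * sin x) : β < x ^ 2 + β ^ 2 := by
  have hsin_two_mul : 2 * sin x * cos x < 2 * x := sin_two_mul x ▸ sin_lt (by linarith)
  refine lt_of_mul_lt_mul_right ?_ (sq_nonneg (sin x))
  calc
    β * sin x ^ 2 = x * (sin x * cos x) := by linear_combination -sin x * h
    _ < x * x := mul_lt_mul_of_pos_left (by linarith) hx
    _ = x ^ 2 * sin x ^ 2 + (x * cos x) ^ 2 := by
      linear_combination -x ^ 2 * sin_sq_add_cos_sq x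
    _ = (x ^ 2 + β ^ 2) * sin x ^ 2 := by rw [h]; ring

end Cotangent

lemma hasDerivAt_mul_cos_sub_mul_sin_of_eq {x β : ℝ → ℝ} {x' β' p : ℝ}
    (hx : HasDerivAt x x' p) (hβ : HasDerivAt β β' p) (hx0 : x p ≠ 0)
    (h : x p * cos (x p) = β p * sin (x p)) :
    HasDerivAt (fun q => x q * cos (x q) - β q * sin (x q))
      (-(sin (x p) / x p) * ((x p ^ 2 + β p ^ 2 - β p) * x' + x p * β')) p := by
  refine ((hx.mul hx.cos).sub (hβ.mul hx.sin)).congr_deriv ?_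
  field_simp
  linear_combination x' * (1 - β p) * h

section SteinStein

variable {b c ρ p : ℝ}

lemma chiFun_pos (hpos : 0 < c ^ 2 * p * (p - 1) - (b + ρ * c * p) ^ 2) :
    0 < chiFun b c ρ p :=
  sqrt_pos.mpr hpos

lemma chiFun_sq_add_sq (hpos : 0 < c ^ 2 * p * (p - 1) - (b + ρ * c * p) ^ 2) :
    chiFun b c ρ p ^ 2 + (b + ρ * c * p) ^ 2 = c ^ 2 * p * (p - 1) := by
  rw [chiFun, sq_sqrt hpos.le, sub_add_cancel]

lemma hasDerivAt_add_mul (b a p : ℝ) : HasDerivAt (fun q => b + a * q) a p :=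
  (hasDerivAt_const_mul a).const_add b

lemma hasDerivAt_chiFun (hpos : 0 < c ^ 2 * p * (p - 1) - (b + ρ * c * p) ^ 2) :
    HasDerivAt (chiFun b c ρ)
      ((c ^ 2 * (2 * p - 1) - 2 * (b + ρ * c * p) * (ρ * c)) / (2 * chiFun b c ρ p)) p := by
  refine HasDerivAt.sqrt ?_ hpos.ne'
  have hquad : HasDerivAt (fun q => c ^ 2 * q * (q - 1)) (c ^ 2 * (2 * p - 1)) p :=
    ((hasDerivAt_const_mul (c ^ 2)).mul ((hasDerivAt_id p).sub_const 1)).congr_deriv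
      (by simp only [id]; ring)
  exact (hquad.sub ((hasDerivAt_add_mul b (ρ * c) p).pow 2)).congr_deriv (by norm_num)

lemma hasDerivAt_GFun_of_eq_zero
    (hpos : 0 < c ^ 2 * p * (p - 1) - (b + ρ * c * p) ^ 2) (hG : GFun b c ρ p = 0) :
    HasDerivAt (GFun b c ρ)
      (-(c ^ 2 * sin (chiFun b c ρ p) / (2 * chiFun b c ρ p ^ 2)) *
        (2 * (p - 1) * (chiFun b c ρ p ^ 2 - b * (1 - (b + ρ * c * p))) +
          (chiFun b c ρ p ^ 2 + (b + ρ * c * p) ^ 2 - (b + ρ * c * p)))) p := by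
  have hχ0 : chiFun b c ρ p ≠ 0 := (chiFun_pos hpos).ne'
  have hsq := chiFun_sq_add_sq hpos
  refine (hasDerivAt_mul_cos_sub_mul_sin_of_eq (hasDerivAt_chiFun hpos)
    (hasDerivAt_add_mul b (ρ * c) p) hχ0 (sub_eq_zero.mp hG)).congr_deriv ?_
  generalize chiFun b c ρ p = x at hχ0 hsq ⊢
  field_simp
  linear_combination -(2 * ρ * c * (1 - (b + ρ * c * p)) * sin x) * hsq

theorem transversality_derivative_negative_general (hb : b ≤ 0) (hp : 1 < p)
    (hpos : 0 < c ^ 2 * p * (p - 1) - (b + ρ * c * p) ^ 2)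
    (hχ : chiFun b c ρ p < π) (hG : GFun b c ρ p = 0) :
    deriv (GFun b c ρ) p < 0 := by
  have hχ0 : 0 < chiFun b c ρ p := chiFun_pos hpos
  have hsin : 0 < sin (chiFun b c ρ p) := sin_pos_of_pos_of_lt_pi hχ0 hχ
  have hc : c ≠ 0 := by
    rintro rfl
    nlinarith [sq_nonneg b]
  have hβ : b + ρ * c * p < 1 := lt_one_of_mul_cos_eq_mul_sin hχ0 hχ (sub_eq_zero.mp hG)
  have hβsq : b + ρ * c * p < chiFun b c ρ p ^ 2 + (b + ρ * c * p) ^ 2 :=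
    lt_sq_add_sq_of_mul_cos_eq_mul_sin hχ0 (sub_eq_zero.mp hG)
  have hbβ : b * (1 - (b + ρ * c * p)) ≤ 0 :=
    mul_nonpos_of_nonpos_of_nonneg hb (sub_nonneg.mpr hβ.le)
  rw [(hasDerivAt_GFun_of_eq_zero hpos hG).deriv]
  refine mul_neg_of_neg_of_pos (neg_lt_zero.mpr (by positivity)) ?_
  refine add_pos_of_nonneg_of_pos (mul_nonneg (by linarith) ?_) (sub_pos.mpr hβsq)
  exact sub_nonneg.mpr (hbβ.trans (sq_nonneg _))

end SteinStein

/-- Non-focality estimate for the correlated Stein–Stein model (with `T = 1`):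
at a momentum `p* > 1` with `χ(p*) ∈ [π/2, π)` satisfying the transversality
relation `G(p*) = 0`, one has `G'(p*) < 0`. -/
theorem transversality_derivative_negative
    (b c ρ pstar : ℝ) (hc : 0 < c) (hb : b ≤ 0) (hρ : ρ ∈ Set.Ioc (-1 : ℝ) 0)
    (hp : 1 < pstar)
    (hpos : 0 < c ^ 2 * pstar * (pstar - 1) - (b + ρ * c * pstar) ^ 2)
    (hχ : chiFun b c ρ pstar ∈ Set.Ico (Real.pi / 2) Real.pi)
    (hG : GFun b c ρ pstar = 0) :
    deriv (GFun b c ρ) pstar < 0 := by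
  exact transversality_derivative_negative_general hb hp hpos hχ.2 hG
end

section
/- Let T > 0, c > 0, b ≤ 0, ρ ∈ (−1, 0], let σ₀, a₀, q₀ be real numbers, let p > 1, set b̃ = b + ρcp, and let χ > 0 satisfy χ² + b̃² = c²·p(p − 1), χ·cos(χT) = b̃·sin(χT), and 0 < χT < π. Let Ẑ : [0,T] → ℝ solve Ẑ'(t) = b·Ẑ(t) + a₀ with Ẑ(0) = σ₀, and set z(t) = (q₀c²/χ)·sin(χt) and q(t) = q₀·(cos(χt) − (b̃/χ)·sin(χt)). Then p·[(p − 1)·∫₀ᵀ z(t)·Ẑ(t) dt + ρc·∫₀ᵀ q(t)·Ẑ(t) dt] = q₀·(σ₀ + a₀·tan(χT/2)/χ). -/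
/-! Put `w = p ((p - 1) z + ρ c q)`, the weight against which `Ẑ` is integrated. Hamilton's equation
for the momentum says that `q` solves the adjoint equation `q' = -(b q + w)` of
`Ẑ' = b Ẑ + a₀`, so `(q Ẑ)' = a₀ q - w Ẑ` and
`∫₀ᵀ w Ẑ = q(0) Ẑ(0) - q(T) Ẑ(T) + a₀ ∫₀ᵀ q`.
The transversality relation says that `q(T) = 0`, and it turns `∫₀ᵀ q` into `q₀ tan(χT/2) / χ`.
-/

open intervalIntegral

theorem integral_mul_eq_of_adjoint_linear_ode {𝔸 : Type*} [NormedRing 𝔸] [NormedAlgebra ℝ 𝔸]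
    [CompleteSpace 𝔸] {s t : ℝ} {q Z a b w : ℝ → 𝔸}
    (hq : ∀ x ∈ Set.uIcc s t, HasDerivWithinAt q (-(q x * b x + w x)) (Set.uIcc s t) x)
    (hZ : ∀ x ∈ Set.uIcc s t, HasDerivWithinAt Z (b x * Z x + a x) (Set.uIcc s t) x)
    (ha : IntervalIntegrable a MeasureTheory.volume s t)
    (hb : IntervalIntegrable b MeasureTheory.volume s t)
    (hw : IntervalIntegrable w MeasureTheory.volume s t) :
    ∫ x in s..t, w x * Z x = q s * Z s - q t * Z t + ∫ x in s..t, q x * a x := by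
  have hq_cont : ContinuousOn q (Set.uIcc s t) := fun x hx => (hq x hx).continuousWithinAt
  have hZ_cont : ContinuousOn Z (Set.uIcc s t) := fun x hx => (hZ x hx).continuousWithinAt
  have by_parts : ∫ x in s..t, (q x * a x - w x * Z x) = q t * Z t - q s * Z s := by
    rw [← integral_deriv_mul_eq_sub_of_hasDerivWithinAt hq hZ
      ((hb.continuousOn_mul hq_cont).add hw).neg ((hb.mul_continuousOn hZ_cont).add ha)]
    exact integral_congr fun x _ => by noncomm_ring
  rw [integral_sub (ha.continuousOn_mul hq_cont) (hw.mul_continuousOn hZ_cont)] at by_parts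
  rw [← neg_sub (q t * Z t), ← by_parts]
  abel

-- At the poles of `tan (x / 2)` both sides are `0`, by division by zero.
theorem tan_half_eq_one_sub_cos_div_sin (x : ℝ) :
    Real.tan (x / 2) = (1 - Real.cos x) / Real.sin x := by
  obtain ⟨y, rfl⟩ : ∃ y, x = 2 * y := ⟨x / 2, by ring⟩
  rw [mul_div_cancel_left₀ y two_ne_zero, Real.tan_eq_sin_div_cos, Real.sin_two_mul,
    Real.cos_two_mul, Real.cos_sq']
  by_cases hsin : Real.sin y = 0
  · simp [hsin]
  · field_simp
    ring

namespace SteinStein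

/-- The volatility component `z` of the optimal Hamiltonian path with initial momentum `q₀`. -/
noncomputable def optimalVolatility (c χ q₀ t : ℝ) : ℝ :=
  q₀ * c ^ 2 / χ * Real.sin (χ * t)

/-- The momentum component `q` of the optimal Hamiltonian path with initial value `q₀`; the
parameter `β` stands for `b̃ = b + ρ c p`. -/
noncomputable def optimalMomentum (β χ q₀ t : ℝ) : ℝ :=
  q₀ * (Real.cos (χ * t) - β / χ * Real.sin (χ * t))

variable {T c p β χ q₀ : ℝ}

theorem continuous_optimalVolatility : Continuous (optimalVolatility c χ q₀) := by
  unfold optimalVolatility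
  fun_prop

theorem continuous_optimalMomentum : Continuous (optimalMomentum β χ q₀) := by
  unfold optimalMomentum
  fun_prop

theorem optimalMomentum_zero : optimalMomentum β χ q₀ 0 = q₀ := by
  simp [optimalMomentum]

theorem hasDerivAt_optimalMomentum (hχ : χ ≠ 0) (hχβ : χ ^ 2 + β ^ 2 = c ^ 2 * p * (p - 1))
    (t : ℝ) :
    HasDerivAt (optimalMomentum β χ q₀)
      (-(β * optimalMomentum β χ q₀ t + p * (p - 1) * optimalVolatility c χ q₀ t)) t := by
  have hmul : HasDerivAt (fun t => χ * t) χ t := by simpa using (hasDerivAt_id t).const_mul χ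
  refine ((hmul.cos.sub (hmul.sin.const_mul (β / χ))).const_mul q₀).congr_deriv ?_
  have hsource : p * (p - 1) * optimalVolatility c χ q₀ t
      = (χ ^ 2 + β ^ 2) * (q₀ / χ * Real.sin (χ * t)) := by
    rw [hχβ, optimalVolatility]
    ring
  rw [hsource, optimalMomentum]
  field_simp
  ring

theorem integral_optimalMomentum (hχ : χ ≠ 0) :
    ∫ t in (0 : ℝ)..T, optimalMomentum β χ q₀ t
      = q₀ * (Real.sin (χ * T) - β / χ * (1 - Real.cos (χ * T))) / χ := by
  have hcos : ∫ t in (0 : ℝ)..T, Real.cos (χ * t) = Real.sin (χ * T) / χ := by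
    simp [integral_comp_mul_left _ hχ, div_eq_inv_mul]
  have hsin : ∫ t in (0 : ℝ)..T, Real.sin (χ * t) = (1 - Real.cos (χ * T)) / χ := by
    simp [integral_comp_mul_left _ hχ, div_eq_inv_mul]
  simp only [optimalMomentum]
  rw [integral_const_mul, integral_sub (Continuous.intervalIntegrable (by fun_prop) _ _)
    (Continuous.intervalIntegrable (by fun_prop) _ _), integral_const_mul, hcos, hsin]
  ring

theorem optimalMomentum_eq_zero_of_transversality (hχ : χ ≠ 0)
    (htrans : χ * Real.cos (χ * T) = β * Real.sin (χ * T)) :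
    optimalMomentum β χ q₀ T = 0 := by
  rw [optimalMomentum, div_mul_eq_mul_div, ← htrans, mul_div_cancel_left₀ _ hχ, sub_self, mul_zero]

theorem sin_ne_zero_of_transversality (hχ : χ ≠ 0)
    (htrans : χ * Real.cos (χ * T) = β * Real.sin (χ * T)) :
    Real.sin (χ * T) ≠ 0 := by
  intro hsin
  have hcos : Real.cos (χ * T) = 0 := by simpa [hsin, hχ] using htrans
  simpa [hsin, hcos] using Real.sin_sq_add_cos_sq (χ * T)

theorem integral_optimalMomentum_of_transversality (hχ : χ ≠ 0)
    (htrans : χ * Real.cos (χ * T) = β * Real.sin (χ * T)) :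
    ∫ t in (0 : ℝ)..T, optimalMomentum β χ q₀ t = q₀ * Real.tan (χ * T / 2) / χ := by
  have hsin : Real.sin (χ * T) ≠ 0 := sin_ne_zero_of_transversality hχ htrans
  have hβ : β / χ = Real.cos (χ * T) / Real.sin (χ * T) := by
    rw [div_eq_div_iff hχ hsin, ← htrans, mul_comm]
  rw [integral_optimalMomentum hχ, tan_half_eq_one_sub_cos_div_sin, hβ]
  congr 2
  field_simp
  linear_combination Real.sin_sq_add_cos_sq (χ * T)

end SteinStein

open SteinStein

theorem stein_stein_correlated_c2_formula_general
    {T c b ρ σ₀ a₀ q₀ p χ : ℝ} (hχ : χ ≠ 0)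
    (hχ2 : χ ^ 2 + (b + ρ * c * p) ^ 2 = c ^ 2 * p * (p - 1))
    (htrans : χ * Real.cos (χ * T) = (b + ρ * c * p) * Real.sin (χ * T))
    {Z : ℝ → ℝ}
    (hZ : ∀ t ∈ Set.uIcc 0 T, HasDerivWithinAt Z (b * Z t + a₀) (Set.uIcc 0 T) t)
    (hZ0 : Z 0 = σ₀) :
    p * ((p - 1) * (∫ t in (0 : ℝ)..T, optimalVolatility c χ q₀ t * Z t)
        + ρ * c * (∫ t in (0 : ℝ)..T, optimalMomentum (b + ρ * c * p) χ q₀ t * Z t))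
      = q₀ * (σ₀ + a₀ * Real.tan (χ * T / 2) / χ) := by
  set z := optimalVolatility c χ q₀
  set q := optimalMomentum (b + ρ * c * p) χ q₀
  have hz_cont : Continuous z := continuous_optimalVolatility
  have hq_cont : Continuous q := continuous_optimalMomentum
  have hZ_cont : ContinuousOn Z (Set.uIcc 0 T) := fun t ht => (hZ t ht).continuousWithinAt
  have hq_zero : q 0 = q₀ := optimalMomentum_zero
  have hq_end : q T = 0 := optimalMomentum_eq_zero_of_transversality hχ htrans
  have adjoint (t : ℝ) : HasDerivAt q (-(q t * b + p * ((p - 1) * z t + ρ * c * q t))) t :=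
    (hasDerivAt_optimalMomentum hχ hχ2 t).congr_deriv (by ring)
  calc
    _ = ∫ t in (0 : ℝ)..T, p * ((p - 1) * z t + ρ * c * q t) * Z t := by
      simp only [mul_assoc, add_mul, integral_const_mul]
      rw [integral_add, integral_const_mul, integral_const_mul, integral_const_mul] <;>
        exact ContinuousOn.intervalIntegrable (by fun_prop)
    _ = q 0 * Z 0 - q T * Z T + ∫ t in (0 : ℝ)..T, q t * a₀ :=
      integral_mul_eq_of_adjoint_linear_ode (fun t _ => (adjoint t).hasDerivWithinAt) hZ
        (by simp) (by simp) (Continuous.intervalIntegrable (by fun_prop) 0 T)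
    _ = q₀ * (σ₀ + a₀ * Real.tan (χ * T / 2) / χ) := by
      rw [integral_mul_const, integral_optimalMomentum_of_transversality hχ htrans, hq_zero, hq_end,
        hZ0]
      ring

/-- Closed form for the second-order constant in the correlated Stein–Stein model:
`p[(p−1)∫₀ᵀ zẐ + ρc∫₀ᵀ qẐ] = q₀(σ₀ + a₀·tan(χT/2)/χ)`, where `b̃ = b + ρcp`,
`z(t) = (q₀c²/χ)sin(χt)`, `q(t) = q₀(cos(χt) − (b̃/χ)sin(χt))` and `Ẑ' = bẐ + a₀`,
`Ẑ(0) = σ₀`. -/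
theorem stein_stein_correlated_c2_formula
    (T c b ρ σ₀ a₀ q₀ p χ : ℝ) (hT : 0 < T) (hc : 0 < c) (hb : b ≤ 0)
    (hρ : ρ ∈ Set.Ioc (-1 : ℝ) 0) (hp : 1 < p) (hχ : 0 < χ)
    (hχ2 : χ ^ 2 + (b + ρ * c * p) ^ 2 = c ^ 2 * p * (p - 1))
    (htrans : χ * Real.cos (χ * T) = (b + ρ * c * p) * Real.sin (χ * T))
    (hχT0 : 0 < χ * T) (hχT : χ * T < Real.pi)
    (Z : ℝ → ℝ)
    (hZ : ∀ t ∈ Set.Icc (0 : ℝ) T,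
      HasDerivWithinAt Z (b * Z t + a₀) (Set.Icc (0 : ℝ) T) t)
    (hZ0 : Z 0 = σ₀) :
    p * ((p - 1) * (∫ t in (0 : ℝ)..T, (q₀ * c ^ 2 / χ * Real.sin (χ * t) * Z t))
        + ρ * c * (∫ t in (0 : ℝ)..T,
            (q₀ * (Real.cos (χ * t) - (b + ρ * c * p) / χ * Real.sin (χ * t)) * Z t)))
      = q₀ * (σ₀ + a₀ * Real.tan (χ * T / 2) / χ) := by
  rw [← Set.uIcc_of_le hT.le] at hZ
  exact stein_stein_correlated_c2_formula_general hχ.ne' hχ2 htrans hZ hZ0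
end
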